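/- arXiv:0907.1095 — 3 statements merged into one kernel-verified Lean document; each statement's English description precedes it below -/
import Mathlib

section
/- Let C ∈ so(q)^p be a nonzero distinguished point for the full GL_q(ℝ)×GL_p(ℝ)-action, i.e. m1(C)·C + m2(C)·C = rC for some real number r, where m1(C) acts via the gl_q(ℝ)-action and m2(C) acts via the gl_p(ℝ)-action. Then r‖C‖² = ‖m1(C)‖² + ‖m2(C)‖², and consequently r > 0. -/
/-!
Pair the equation `m1(C)·C + m2(C)·C = rC` with `C`. The moment map identities
`⟨m1(C)·C, C⟩ = ‖m1(C)‖²` (`ip_glqAct_m1`) and `⟨m2(C)·C, C⟩ = ‖m2(C)‖²` (`ip_glpAct_m2`),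
both trace computations using skew-symmetry, then give the norm formula.
For the sign, some `Cᵏ` is nonzero, so the diagonal entry `m2(C)ₖₖ = ‖Cᵏ‖²` is nonzero and
`‖m2(C)‖² > 0`; since `‖C‖² ≥ 0`, this forces `r > 0`.
-/

open Matrix BigOperators

/-- The moment map polynomial `m1(C) = -2 ∑ α, (Cᵅ)²`. -/
def m1 {p q : ℕ} (C : Fin p → Matrix (Fin q) (Fin q) ℝ) : Matrix (Fin q) (Fin q) ℝ :=
  (-2 : ℝ) • ∑ α, C α * C α

/-- The moment map polynomial `m2(C)`, the symmetric `p×p` matrix with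
entries `m2(C)_{ij} = −tr(CⁱCʲ)`. -/
def m2 {p q : ℕ} (C : Fin p → Matrix (Fin q) (Fin q) ℝ) : Matrix (Fin p) (Fin p) ℝ :=
  Matrix.of fun i j => -((C i * C j).trace)

/-- The inner product on `so(q)^p`: `⟨C,D⟩ = ∑ α, tr(Cᵅ (Dᵅ)ᵀ)`. -/
def ip {p q : ℕ} (C D : Fin p → Matrix (Fin q) (Fin q) ℝ) : ℝ :=
  ∑ α, (C α * (D α)ᵀ).trace

/-- The Lie algebra action of `gl_q(ℝ)` on `so(q)^p`:
`X · C = (XC¹ + C¹Xᵀ, …, XCᵖ + CᵖXᵀ)`. -/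
def glqAct {p q : ℕ} (X : Matrix (Fin q) (Fin q) ℝ)
    (C : Fin p → Matrix (Fin q) (Fin q) ℝ) : Fin p → Matrix (Fin q) (Fin q) ℝ :=
  fun k => X * C k + C k * Xᵀ

/-- The Lie algebra action of `gl_p(ℝ)` on `so(q)^p`: `(Y·C)ᵏ = ∑ l, Y l k • Cˡ`. -/
def glpAct {p q : ℕ} (Y : Matrix (Fin p) (Fin p) ℝ)
    (C : Fin p → Matrix (Fin q) (Fin q) ℝ) : Fin p → Matrix (Fin q) (Fin q) ℝ :=
  fun k => ∑ l, Y l k • C l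

lemma m1_transpose {p q : ℕ} (C : Fin p → Matrix (Fin q) (Fin q) ℝ)
    (hC : ∀ k, (C k)ᵀ = -(C k)) : (m1 C)ᵀ = m1 C := by
  simp [m1, Matrix.transpose_sum, Matrix.transpose_mul, hC]

lemma trace_mul_transpose_self_nonneg {n : ℕ} (A : Matrix (Fin n) (Fin n) ℝ) :
    0 ≤ (A * Aᵀ).trace := by
  simp only [Matrix.trace, Matrix.diag, Matrix.mul_apply, Matrix.transpose_apply]
  exact Finset.sum_nonneg fun i _ => Finset.sum_nonneg fun j _ => mul_self_nonneg _

lemma trace_mul_transpose_self_pos {n : ℕ} {A : Matrix (Fin n) (Fin n) ℝ} (hA : A ≠ 0) :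
    0 < (A * Aᵀ).trace := by
  refine (trace_mul_transpose_self_nonneg A).lt_of_ne' fun h => hA ?_
  rw [← Matrix.conjTranspose_eq_transpose_of_trivial] at h
  exact Matrix.trace_mul_conjTranspose_self_eq_zero_iff.mp h

lemma ip_glqAct_m1 {p q : ℕ} (C : Fin p → Matrix (Fin q) (Fin q) ℝ)
    (hC : ∀ k, (C k)ᵀ = -(C k)) :
    ip (glqAct (m1 C) C) C = (m1 C * (m1 C)ᵀ).trace := by
  -- By cyclicity of the trace, both terms of the action contribute `-tr(m1 (Cᵏ)²)`.
  have h (k : Fin p) : (glqAct (m1 C) C k * (C k)ᵀ).trace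
      = -2 * (m1 C * (C k * C k)).trace := by
    have hcyc : (C k * m1 C * C k).trace = (m1 C * (C k * C k)).trace := by
      rw [Matrix.mul_assoc, Matrix.trace_mul_comm, Matrix.mul_assoc]
    simp only [glqAct, m1_transpose C hC, hC, Matrix.mul_neg, Matrix.add_mul,
      Matrix.trace_neg, Matrix.trace_add, hcyc, Matrix.mul_assoc (m1 C)]
    ring
  rw [m1_transpose C hC, ip, Finset.sum_congr rfl fun k _ => h k, ← Finset.mul_sum,
    ← Matrix.trace_sum, ← Matrix.mul_sum]
  conv_rhs => enter [1, 2]; rw [m1]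
  rw [Matrix.mul_smul, Matrix.trace_smul, smul_eq_mul]

lemma ip_glpAct_m2 {p q : ℕ} (C : Fin p → Matrix (Fin q) (Fin q) ℝ)
    (hC : ∀ k, (C k)ᵀ = -(C k)) :
    ip (glpAct (m2 C) C) C = (m2 C * (m2 C)ᵀ).trace := by
  have h (k : Fin p) : (glpAct (m2 C) C k * (C k)ᵀ).trace = ∑ l, m2 C l k * m2 C l k := by
    simp [glpAct, hC, Finset.sum_mul, Matrix.trace_sum, m2]
  rw [ip, Finset.sum_congr rfl fun k _ => h k, Finset.sum_comm]
  simp [Matrix.trace, Matrix.mul_apply]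

/-- Let `C ∈ so(q)^p` be a nonzero distinguished point for the full
`GL_q(ℝ)×GL_p(ℝ)`-action, i.e. `m1(C)·C + m2(C)·C = rC` for some real number `r`, where
`m1(C)` acts via the `gl_q(ℝ)`-action and `m2(C)` acts via the `gl_p(ℝ)`-action.  Then
`r‖C‖² = ‖m1(C)‖² + ‖m2(C)‖²`, and consequently `r > 0`. -/
theorem statement5 (p q : ℕ) (hp : 1 ≤ p) (hq : 1 ≤ q)
    (C : Fin p → Matrix (Fin q) (Fin q) ℝ) (hC : ∀ k, (C k)ᵀ = -(C k))
    (hC0 : C ≠ 0) (r : ℝ)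
    (hdist : (fun k => glqAct (m1 C) C k + glpAct (m2 C) C k) = fun k => r • C k) :
    r * ip C C = (m1 C * (m1 C)ᵀ).trace + (m2 C * (m2 C)ᵀ).trace ∧ 0 < r := by
  have hnorm : r * ip C C = (m1 C * (m1 C)ᵀ).trace + (m2 C * (m2 C)ᵀ).trace := by
    rw [← ip_glqAct_m1 C hC, ← ip_glpAct_m2 C hC]
    simp only [ip]
    rw [Finset.mul_sum, ← Finset.sum_add_distrib]
    refine Finset.sum_congr rfl fun k _ => ?_
    rw [← Matrix.trace_add, ← Matrix.add_mul, congrFun hdist k, Matrix.smul_mul,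
      Matrix.trace_smul, smul_eq_mul]
  refine ⟨hnorm, ?_⟩
  have hip : 0 ≤ ip C C := Finset.sum_nonneg fun k _ => trace_mul_transpose_self_nonneg (C k)
  have hm2 : m2 C ≠ 0 := by
    obtain ⟨k, hk⟩ := Function.ne_iff.mp hC0
    intro h
    have hkk : m2 C k k = (C k * (C k)ᵀ).trace := by simp [m2, hC]
    exact (trace_mul_transpose_self_pos hk).ne' (by rw [← hkk, h, Matrix.zero_apply])
  have hpos : 0 < r * ip C C := hnorm ▸
    add_pos_of_nonneg_of_pos (trace_mul_transpose_self_nonneg _) (trace_mul_transpose_self_pos hm2)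
  exact pos_of_mul_pos_left hpos hip
end

section
/- Let C ∈ so(q)^p be nonzero and suppose λ ∈ ℝ and a symmetric q×q real matrix D satisfy m1(C) = 2λ·Id_q + 2(D + Dᵀ) and DᵀCᵏ + CᵏD = 0 for all k = 1,…,p. Then λ > 0. (In other words, Ricci Yang–Mills solitons of symmetric Lie type on 2-step nilpotent Lie groups are expanders.) -/
/-!
Put `M = m1 C`, a symmetric matrix. Its trace is `2 ∑ tr ((Cᵅ)ᵀ Cᵅ)`, which is positive because
`C ≠ 0`; in particular `M ≠ 0`. As `D` anticommutes with every `Cᵅ`, cyclicity of the trace gives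
`tr (D (Cᵅ)²) = -tr (D (Cᵅ)²)`, hence `tr (M D) = 0`. Multiplying `M = 2λ Id + 4D` by `M` and
taking traces yields `tr (M²) = 2λ tr M`. Both traces are positive, so `λ > 0`.
-/

open Matrix BigOperators

lemma trace_transpose_mul_self_nonneg {q : ℕ} (A : Matrix (Fin q) (Fin q) ℝ) :
    0 ≤ (Aᵀ * A).trace := by
  simpa using (Matrix.posSemidef_conjTranspose_mul_self A).trace_nonneg

lemma trace_transpose_mul_self_pos {q : ℕ} {A : Matrix (Fin q) (Fin q) ℝ} (hA : A ≠ 0) :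
    0 < (Aᵀ * A).trace := by
  refine lt_of_le_of_ne (trace_transpose_mul_self_nonneg A) fun h => hA ?_
  rw [← Matrix.trace_conjTranspose_mul_self_eq_zero_iff]
  simpa using h.symm

lemma trace_m1_pos {p q : ℕ} {C : Fin p → Matrix (Fin q) (Fin q) ℝ}
    (hC : ∀ k, (C k)ᵀ = -(C k)) (hC0 : C ≠ 0) : 0 < (m1 C).trace := by
  have h : (m1 C).trace = 2 * ∑ k, ((C k)ᵀ * C k).trace := by
    simp [m1, hC, Matrix.trace_sum]
  obtain ⟨k, hk⟩ := Function.ne_iff.mp hC0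
  rw [h]
  exact mul_pos two_pos (Finset.sum_pos' (fun i _ => trace_transpose_mul_self_nonneg (C i))
    ⟨k, Finset.mem_univ k, trace_transpose_mul_self_pos hk⟩)

lemma transpose_m1 {p q : ℕ} {C : Fin p → Matrix (Fin q) (Fin q) ℝ}
    (hC : ∀ k, (C k)ᵀ = -(C k)) : (m1 C)ᵀ = m1 C := by
  simp [m1, Matrix.transpose_sum, Matrix.transpose_mul, hC]

/-- A matrix anticommuting with every `Cᵅ` is trace-orthogonal to the moment map `m1 C`. -/
lemma trace_m1_mul_eq_zero {p q : ℕ} {C : Fin p → Matrix (Fin q) (Fin q) ℝ}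
    {D : Matrix (Fin q) (Fin q) ℝ} (h : ∀ k, D * C k + C k * D = 0) :
    (m1 C * D).trace = 0 := by
  have hk : ∀ k, (C k * C k * D).trace = 0 := fun k => by
    have h1 : (C k * C k * D).trace = -(C k * D * C k).trace := by
      have h0 : C k * C k * D = -(C k * D * C k) := by
        have := congrArg (C k * ·) (h k)
        simp only [mul_add, mul_zero, ← mul_assoc] at this
        exact eq_neg_of_add_eq_zero_right this
      rw [h0, Matrix.trace_neg]
    have h2 : (C k * D * C k).trace = (C k * C k * D).trace := by
      rw [Matrix.trace_mul_comm, mul_assoc]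
    linarith
  simp [m1, Finset.sum_mul, Matrix.trace_sum, hk]

/-- Let `C ∈ so(q)^p` be nonzero and suppose `λ ∈ ℝ` and a symmetric `q×q` real matrix `D`
satisfy `m1(C) = 2λ·Id_q + 2(D + Dᵀ)` and `DᵀCᵏ + CᵏD = 0` for all `k`.  Then `λ > 0`.
(Ricci Yang–Mills solitons of symmetric Lie type on 2-step nilpotent Lie groups are
expanders.) -/
theorem statement7 (p q : ℕ) (hp : 1 ≤ p) (hq : 1 ≤ q)
    (C : Fin p → Matrix (Fin q) (Fin q) ℝ) (hC : ∀ k, (C k)ᵀ = -(C k))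
    (hC0 : C ≠ 0) (l : ℝ) (D : Matrix (Fin q) (Fin q) ℝ) (hD : Dᵀ = D)
    (hsol : m1 C = (2 * l) • (1 : Matrix (Fin q) (Fin q) ℝ) + (2 : ℝ) • (D + Dᵀ))
    (hstab : ∀ k, Dᵀ * C k + C k * D = 0) :
    0 < l := by
  have htr : 0 < (m1 C).trace := trace_m1_pos hC hC0
  have hM : m1 C ≠ 0 := fun h => by simp [h] at htr
  have hsq : 0 < (m1 C * m1 C).trace := by
    simpa [transpose_m1 hC] using trace_transpose_mul_self_pos hM
  have hMD : (m1 C * D).trace = 0 := trace_m1_mul_eq_zero fun k => by simpa [hD] using hstab k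
  have key : (m1 C * m1 C).trace = 2 * l * (m1 C).trace := by
    have h := congrArg (fun X => (m1 C * X).trace) hsol
    simpa [hD, mul_add, hMD] using h
  rw [key] at hsq
  linarith [pos_of_mul_pos_left hsq htr.le]
end

section
/- Let C, D ∈ so(q)^p be tuples whose components are each linearly independent in so(q). Then there exists a Lie algebra isomorphism 𝔑_C → 𝔑_D preserving the standard inner products (equivalently, the corresponding simply connected 2-step nilpotent Lie groups N_C and N_D with their left-invariant metrics are isometric as Riemannian manifolds) if and only if D lies in the orbit O(q)×O(p)·C, i.e. there exist g ∈ O(q) and h ∈ O(p) with D = h·(g·C). -/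
/-!
Linear independence of the components of `C` says exactly that the brackets of `𝔑_C` span the
summand `ℝ^p`: a vector `w` annihilating all of them gives `∑ w_k Cᵏ = 0`, hence `w = 0`. An
isomorphism carries brackets to brackets, and brackets of `𝔑_D` lie in `ℝ^p`, so it maps `ℝ^p` into
`ℝ^p` (`snd_to_snd`). If it is also isometric, it maps the orthogonal complement `ℝ^q` into `ℝ^q`, so
it is block diagonal with orthogonal blocks `G` and `H`. Compatibility with the brackets then reads
`∑ l, H k l • Cˡ = Gᵀ Dᵏ G`, that is, `D = Hᵀ · (G · C)`. Conversely, given `D = h · (g · C)`, the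
map `(x, z) ↦ (g x, hᵀ z)` is an isometric isomorphism.

The argument uses the whole derived algebra `ℝ^p` rather than the centre, since the centre is strictly
larger when the matrices `Cᵏ` have a common kernel.
-/

open Matrix BigOperators

/-- The bracket on `ℝ^q ⊕ ℝ^p` determined by a tuple `C ∈ so(q)^p` of structure matrices:
`[(x,z),(x′,z′)] = (0, (xᵀC¹x′, …, xᵀCᵖx′))`. -/
def nilBracket {p q : ℕ} (C : Fin p → Matrix (Fin q) (Fin q) ℝ)
    (u v : (Fin q → ℝ) × (Fin p → ℝ)) : (Fin q → ℝ) × (Fin p → ℝ) :=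
  (0, fun k => u.1 ⬝ᵥ (C k).mulVec v.1)

/-- The standard inner product on `ℝ^q ⊕ ℝ^p`. -/
def stdIP {p q : ℕ} (u v : (Fin q → ℝ) × (Fin p → ℝ)) : ℝ :=
  (∑ i, u.1 i * v.1 i) + ∑ k, u.2 k * v.2 k

/-- The action of `GL_q(ℝ)` on `so(q)^p`: `g · C = (g C¹ gᵀ, …, g Cᵖ gᵀ)`. -/
def gAct {p q : ℕ} (g : Matrix (Fin q) (Fin q) ℝ)
    (C : Fin p → Matrix (Fin q) (Fin q) ℝ) : Fin p → Matrix (Fin q) (Fin q) ℝ :=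
  fun k => g * C k * gᵀ

/-- The action of `GL_p(ℝ)` on `so(q)^p`: `(h · C)ᵏ = ∑ l, h l k • Cˡ`. -/
def hAct {p q : ℕ} (h : Matrix (Fin p) (Fin p) ℝ)
    (C : Fin p → Matrix (Fin q) (Fin q) ℝ) : Fin p → Matrix (Fin q) (Fin q) ℝ :=
  fun k => ∑ l, h l k • C l

theorem ext_of_dotProduct_mulVec {n : ℕ} {M N : Matrix (Fin n) (Fin n) ℝ}
    (h : ∀ x y : Fin n → ℝ, x ⬝ᵥ M *ᵥ y = x ⬝ᵥ N *ᵥ y) : M = N := by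
  ext i j
  simpa using h (Pi.single i 1) (Pi.single j 1)

theorem dotProduct_mulVec_conj {n : ℕ} (G M : Matrix (Fin n) (Fin n) ℝ) (x y : Fin n → ℝ) :
    (G *ᵥ x) ⬝ᵥ M *ᵥ (G *ᵥ y) = x ⬝ᵥ (Gᵀ * M * G) *ᵥ y := by
  rw [← mulVec_mulVec, ← mulVec_mulVec, dotProduct_mulVec x, vecMul_transpose]

theorem dotProduct_sum_smul_mulVec {p q : ℕ} (C : Fin p → Matrix (Fin q) (Fin q) ℝ)
    (w : Fin p → ℝ) (x y : Fin q → ℝ) :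
    x ⬝ᵥ (∑ l, w l • C l) *ᵥ y = ∑ l, w l * (x ⬝ᵥ C l *ᵥ y) := by
  simp [sum_mulVec, dotProduct_sum, smul_mulVec]

theorem orthogonal_of_dotProduct {n : ℕ} {G : Matrix (Fin n) (Fin n) ℝ}
    (h : ∀ x y : Fin n → ℝ, (G *ᵥ x) ⬝ᵥ (G *ᵥ y) = x ⬝ᵥ y) : Gᵀ * G = 1 := by
  apply ext_of_dotProduct_mulVec
  intro x y
  simpa [h] using (dotProduct_mulVec_conj G 1 x y).symm

theorem stdIP_eq {p q : ℕ} (u v : (Fin q → ℝ) × (Fin p → ℝ)) :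
    stdIP u v = u.1 ⬝ᵥ v.1 + u.2 ⬝ᵥ v.2 := rfl

/-- A linear map vanishing on all brackets of `𝔑_C` vanishes on `ℝ^p`: its coordinates are
functionals `w`, and `∑ l, w l • C l = 0` forces `w = 0`. -/
theorem eq_zero_of_bracket {p q : ℕ} {C : Fin p → Matrix (Fin q) (Fin q) ℝ}
    (hC : LinearIndependent ℝ C) (B : Matrix (Fin q) (Fin p) ℝ)
    (h : ∀ x y : Fin q → ℝ, B *ᵥ (fun k => x ⬝ᵥ C k *ᵥ y) = 0) : B = 0 := by
  ext i l
  refine Fintype.linearIndependent_iff.1 hC (fun l => B i l) ?_ l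
  apply ext_of_dotProduct_mulVec
  intro x y
  rw [dotProduct_sum_smul_mulVec]
  simpa [mulVec, dotProduct] using congrFun (h x y) i

/-- A linear map `𝔑_C → 𝔑_D` compatible with the brackets maps the derived algebra `ℝ^p` into
`ℝ^p`. -/
theorem snd_to_snd {p q : ℕ} {C D : Fin p → Matrix (Fin q) (Fin q) ℝ}
    (hC : LinearIndependent ℝ C)
    (e : ((Fin q → ℝ) × (Fin p → ℝ)) →ₗ[ℝ] ((Fin q → ℝ) × (Fin p → ℝ)))
    (he : ∀ u v, e (nilBracket C u v) = nilBracket D (e u) (e v)) (z : Fin p → ℝ) :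
    (e (0, z)).1 = 0 := by
  let B := (LinearMap.fst ℝ _ _ ∘ₗ e ∘ₗ LinearMap.inr ℝ (Fin q → ℝ) (Fin p → ℝ))
  have hB : ∀ z, LinearMap.toMatrix' B *ᵥ z = (e (0, z)).1 := fun z => by
    rw [LinearMap.toMatrix'_mulVec]; rfl
  have h0 : LinearMap.toMatrix' B = 0 := by
    apply eq_zero_of_bracket hC
    intro x y
    rw [hB]
    exact congrArg Prod.fst (he (x, 0) (y, 0))
  rw [← hB, h0, zero_mulVec]

/-- Let `C, D ∈ so(q)^p` be tuples whose components are each linearly independent in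
`so(q)`.  Then there exists a Lie algebra isomorphism `𝔑_C → 𝔑_D` preserving the standard
inner products (equivalently, the corresponding simply connected 2-step nilpotent Lie
groups `N_C` and `N_D` with their left-invariant metrics are isometric as Riemannian
manifolds) if and only if `D` lies in the orbit `O(q)×O(p)·C`, i.e. there exist `g ∈ O(q)`
and `h ∈ O(p)` with `D = h·(g·C)`. -/
theorem statement13 (p q : ℕ) (hp : 1 ≤ p) (hq : 1 ≤ q)
    (C D : Fin p → Matrix (Fin q) (Fin q) ℝ)
    (hC : ∀ k, (C k)ᵀ = -(C k)) (hD : ∀ k, (D k)ᵀ = -(D k))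
    (hCind : LinearIndependent ℝ C) (hDind : LinearIndependent ℝ D) :
    (∃ e : ((Fin q → ℝ) × (Fin p → ℝ)) ≃ₗ[ℝ] ((Fin q → ℝ) × (Fin p → ℝ)),
      (∀ u v, e (nilBracket C u v) = nilBracket D (e u) (e v)) ∧
      (∀ u v, stdIP (e u) (e v) = stdIP u v)) ↔
    (∃ (g : Matrix (Fin q) (Fin q) ℝ) (h : Matrix (Fin p) (Fin p) ℝ),
      g * gᵀ = 1 ∧ h * hᵀ = 1 ∧ D = hAct h (gAct g C)) := by
  constructor
  · rintro ⟨e, he, hip⟩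
    have h1 := snd_to_snd hCind e.toLinearMap he
    let A := LinearMap.fst ℝ _ _ ∘ₗ e.toLinearMap ∘ₗ LinearMap.inl ℝ (Fin q → ℝ) (Fin p → ℝ)
    let B := LinearMap.snd ℝ _ _ ∘ₗ e.toLinearMap ∘ₗ LinearMap.inr ℝ (Fin q → ℝ) (Fin p → ℝ)
    obtain ⟨G, hG⟩ : ∃ G : Matrix (Fin q) (Fin q) ℝ, ∀ x, G *ᵥ x = (e (x, 0)).1 :=
      ⟨LinearMap.toMatrix' A, fun x => by rw [LinearMap.toMatrix'_mulVec]; rfl⟩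
    obtain ⟨H, hH⟩ : ∃ H : Matrix (Fin p) (Fin p) ℝ, ∀ z, H *ᵥ z = (e (0, z)).2 :=
      ⟨LinearMap.toMatrix' B, fun x => by rw [LinearMap.toMatrix'_mulVec]; rfl⟩
    have ez : ∀ z, e (0, z) = (0, H *ᵥ z) := fun z => Prod.ext (h1 z) (hH z).symm
    have HH : Hᵀ * H = 1 := by
      apply orthogonal_of_dotProduct
      intro z w
      simpa [ez, stdIP_eq] using hip (0, z) (0, w)
    have HH' : H * Hᵀ = 1 := mul_eq_one_comm.1 HH
    -- `H` is onto, so orthogonality to `e (0 ⊕ ℝ^p)` is orthogonality to all of `0 ⊕ ℝ^p`.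
    have h2 : ∀ x, (e (x, 0)).2 = 0 := by
      intro x
      apply dotProduct_eq_zero
      intro w
      have := hip (x, 0) (0, Hᵀ *ᵥ w)
      simpa [ez, stdIP_eq, HH'] using this
    have ex : ∀ x, e (x, 0) = (G *ᵥ x, 0) := fun x => Prod.ext (hG x).symm (h2 x)
    have GG : Gᵀ * G = 1 := by
      apply orthogonal_of_dotProduct
      intro x y
      simpa [ex, stdIP_eq] using hip (x, 0) (y, 0)
    have GG' : G * Gᵀ = 1 := mul_eq_one_comm.1 GG
    have key : ∀ k, ∑ l, H k l • C l = Gᵀ * D k * G := by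
      intro k
      apply ext_of_dotProduct_mulVec
      intro x y
      rw [dotProduct_sum_smul_mulVec, ← dotProduct_mulVec_conj]
      have := congrFun (congrArg Prod.snd (he (x, 0) (y, 0))) k
      simp only [nilBracket, ez, ex] at this
      exact this
    refine ⟨G, Hᵀ, GG', by simpa using HH, ?_⟩
    funext k
    calc D k = (G * Gᵀ) * D k * (G * Gᵀ) := by simp [GG']
      _ = G * (Gᵀ * D k * G) * Gᵀ := by simp only [Matrix.mul_assoc]
      _ = hAct Hᵀ (gAct G C) k := by
        simp [← key, hAct, gAct, Matrix.mul_sum, Matrix.sum_mul]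
  · rintro ⟨g, h, hg, hh, rfl⟩
    have hg' : gᵀ * g = 1 := mul_eq_one_comm.1 hg
    have hh' : hᵀ * h = 1 := mul_eq_one_comm.1 hh
    have iso : ∀ {n : ℕ} {M : Matrix (Fin n) (Fin n) ℝ}, Mᵀ * M = 1 → ∀ x y : Fin n → ℝ,
        (M *ᵥ x) ⬝ᵥ (M *ᵥ y) = x ⬝ᵥ y := by
      intro n M hM x y
      simpa [hM] using dotProduct_mulVec_conj M 1 x y
    refine ⟨(Matrix.toLin'OfInv hg' hg).prodCongr
      (Matrix.toLin'OfInv hh hh'), ?_, ?_⟩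
    · intro u v
      refine Prod.ext (map_zero (Matrix.toLin'OfInv hg' hg)) ?_
      funext k
      change (hᵀ *ᵥ fun k => u.1 ⬝ᵥ C k *ᵥ v.1) k =
        (g *ᵥ u.1) ⬝ᵥ (∑ l, h l k • (g * C l * gᵀ)) *ᵥ (g *ᵥ v.1)
      rw [dotProduct_sum_smul_mulVec]
      have hc : ∀ l, gᵀ * (g * C l * gᵀ) * g = C l := fun l => by
        calc gᵀ * (g * C l * gᵀ) * g = (gᵀ * g) * C l * (gᵀ * g) := by
              simp only [Matrix.mul_assoc]
          _ = C l := by simp [hg']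
      simp only [dotProduct_mulVec_conj, hc]
      rfl
    · intro u v
      change (g *ᵥ u.1) ⬝ᵥ (g *ᵥ v.1) + (hᵀ *ᵥ u.2) ⬝ᵥ (hᵀ *ᵥ v.2) = _
      rw [iso hg', iso (by simpa using hh)]
      rfl
end
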